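/- arXiv:1806.06668 — 3 statements merged into one kernel-verified Lean document; each statement's English description precedes it below -/
import Mathlib

section
/- Let P = (x̂, ŷ) be a proper rational parametrization of the curve E(x,y) = 0. If a function φ is analytic in a neighborhood of a point x* ∈ ℂ with x* ≠ x̂(∞) and satisfies E(x, φ(x)) = 0 for all x in that neighborhood, then there exists a unique s* ∈ ℂ such that x̂(s*) = x* and ŷ = φ∘x̂ holds in a neighborhood of s*. -/
open Polynomial

/-- A rational map of the Riemann sphere, given by a pair of coprime polynomials. -/
structure RationalMap where
  num : Polynomial ℂ
  den : Polynomial ℂ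
  den_ne_zero : den ≠ 0
  coprime : IsCoprime num den

namespace RationalMap

/-- The finite-valued function `s ↦ num(s)/den(s)` (junk value `0` at poles). -/
noncomputable def toFun (f : RationalMap) (s : ℂ) : ℂ := f.num.eval s / f.den.eval s

/-- Evaluation as a map to the Riemann sphere `ℂ ∪ {∞}`. -/
noncomputable def eval (f : RationalMap) (s : ℂ) : OnePoint ℂ :=
  if f.den.eval s = 0 then OnePoint.infty else ((f.toFun s : ℂ) : OnePoint ℂ)

/-- The value of the rational map at the point `∞` of the Riemann sphere. -/
noncomputable def evalInf (f : RationalMap) : OnePoint ℂ :=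
  if f.den.degree < f.num.degree then OnePoint.infty
  else ((f.num.coeff f.den.natDegree / f.den.leadingCoeff : ℂ) : OnePoint ℂ)

/-- A rational map is real if (after clearing a common constant) its numerator and
denominator can be written with real coefficients. -/
def IsReal (f : RationalMap) : Prop :=
  ∃ (c : ℂ) (P Q : Polynomial ℝ), c ≠ 0 ∧
    c • f.num = P.map (algebraMap ℝ ℂ) ∧ c • f.den = Q.map (algebraMap ℝ ℂ)

end RationalMap

/-- Evaluation of a bivariate polynomial `E` at `(x,y)`. -/
noncomputable def evalE (E : MvPolynomial (Fin 2) ℂ) (x y : ℂ) : ℂ :=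
  MvPolynomial.eval ![x, y] E

/-- `(X,Y)` is a rational parametrization of the curve `E(x,y) = 0`:
`E(X(s), Y(s)) = 0` for all but finitely many `s ∈ ℂ`. -/
def IsParametrization (E : MvPolynomial (Fin 2) ℂ) (X Y : RationalMap) : Prop :=
  Set.Finite {s : ℂ |
    ¬ (X.den.eval s ≠ 0 ∧ Y.den.eval s ≠ 0 ∧ evalE E (X.toFun s) (Y.toFun s) = 0)}

/-- The parametrization `(X,Y)` is proper: for all but finitely many points `(x,y)` on the
curve, the equation `(X(s), Y(s)) = (x,y)` has exactly one solution `s ∈ ℂ`. -/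
def IsProper (E : MvPolynomial (Fin 2) ℂ) (X Y : RationalMap) : Prop :=
  Set.Finite {P : ℂ × ℂ | evalE E P.1 P.2 = 0 ∧
    ¬ ∃! s : ℂ, X.eval s = ((P.1 : ℂ) : OnePoint ℂ) ∧ Y.eval s = ((P.2 : ℂ) : OnePoint ℂ)}

/-- `s` is a critical point of the parametrization `(X,Y)` if `X′(s) = 0` (as a rational
function, i.e. the numerator `num′·den − num·den′` of the derivative vanishes at `s`) or
`Y(s) = ∞`. -/
def IsCriticalPt (X Y : RationalMap) (s : ℂ) : Prop :=
  (X.num.derivative * X.den - X.num * X.den.derivative).eval s = 0 ∨ Y.den.eval s = 0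

open Filter Topology

theorem RationalMap.eval_eq_coe_iff (f : RationalMap) (s x : ℂ) :
    f.eval s = ((x : ℂ) : OnePoint ℂ) ↔ f.den.eval s ≠ 0 ∧ f.toFun s = x := by
  unfold RationalMap.eval
  split_ifs with h <;> simp [h]

theorem RationalMap.num_eval_eq (f : RationalMap) {s : ℂ} (h : f.den.eval s ≠ 0) :
    f.num.eval s = f.toFun s * f.den.eval s := by
  rw [RationalMap.toFun, div_mul_cancel₀ _ h]

/-- The numerator and denominator of a rational map have no common zero. -/
theorem RationalMap.den_eval_ne_zero_of_num_eval_eq_mul (f : RationalMap) {s a : ℂ}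
    (h : f.num.eval s = a * f.den.eval s) : f.den.eval s ≠ 0 := by
  intro h0
  obtain ⟨u, v, huv⟩ := f.coprime
  have := congrArg (Polynomial.eval s) huv
  simp [h, h0] at this

theorem RationalMap.analyticAt_toFun (f : RationalMap) {s : ℂ} (h : f.den.eval s ≠ 0) :
    AnalyticAt ℂ f.toFun s := by
  have hn := AnalyticAt.aeval_polynomial (𝕜 := ℂ) (analyticAt_id (𝕜 := ℂ) (z := s)) f.num
  have hd := AnalyticAt.aeval_polynomial (𝕜 := ℂ) (analyticAt_id (𝕜 := ℂ) (z := s)) f.den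
  simp only [id, Polynomial.coe_aeval_eq_eval] at hn hd
  exact hn.div hd h

/-- If a rational map tends to `a` along a filter going to infinity, then its value at infinity
is `a`. -/
theorem RationalMap.evalInf_eq_of_tendsto (f : RationalMap) (a : ℂ) (l : Filter ℂ) [l.NeBot]
    (hl : l ≤ Bornology.cobounded ℂ) (hden : ∀ᶠ s in l, f.den.eval s ≠ 0)
    (hlim : Tendsto f.toFun l (𝓝 a)) : f.evalInf = ((a : ℂ) : OnePoint ℂ) := by
  set N := max f.num.natDegree f.den.natDegree with hN
  have hinv : Tendsto (fun s : ℂ => s⁻¹) l (𝓝 0) := tendsto_inv₀_cobounded.mono_left hl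
  have hne : ∀ᶠ s in l, s ≠ 0 := hl (Bornology.eventually_ne_cobounded 0)
  have key : ∀ p : ℂ[X], Tendsto (fun s : ℂ => (p.reflect N).eval s⁻¹) l (𝓝 (p.coeff N)) := by
    intro p
    have h := ((p.reflect N).continuous.tendsto 0).comp hinv
    rwa [← Polynomial.coeff_zero_eq_eval_zero, Polynomial.coeff_reflect,
      Polynomial.revAt_zero] at h
  have hreflect : ∀ (p : ℂ[X]) (s : ℂ), p.natDegree ≤ N → s ≠ 0 →
      (p.reflect N).eval s⁻¹ * s ^ N = p.eval s := by
    intro p s hp hs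
    let := invertibleOfNonzero hs
    simpa [Polynomial.eval₂_eq_eval_map] using
      Polynomial.eval₂_reflect_mul_pow (RingHom.id ℂ) s N p hp
  have hcoeff : f.num.coeff N = a * f.den.coeff N := by
    refine tendsto_nhds_unique (key f.num) ((hlim.mul (key f.den)).congr' ?_)
    filter_upwards [hden, hne] with s hs hs0
    refine mul_right_cancel₀ (pow_ne_zero N hs0) ?_
    rw [mul_assoc, hreflect _ _ (le_max_right _ _) hs0, hreflect _ _ (le_max_left _ _) hs0,
      f.num_eval_eq hs]
  unfold RationalMap.evalInf
  split_ifs with hdeg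
  · exfalso
    have hlt : f.num ≠ 0 := Polynomial.ne_zero_of_degree_gt hdeg
    have hNn : N = f.num.natDegree :=
      max_eq_left (Polynomial.natDegree_le_natDegree hdeg.le)
    rw [hNn, Polynomial.coeff_eq_zero_of_degree_lt (p := f.den)
      (by rwa [← Polynomial.degree_eq_natDegree hlt]), mul_zero] at hcoeff
    exact hlt (Polynomial.leadingCoeff_eq_zero.mp hcoeff)
  · have hNd : N = f.den.natDegree :=
      max_eq_right (Polynomial.natDegree_le_natDegree (not_lt.mp hdeg))
    rw [hNd] at hcoeff
    rw [hcoeff, Polynomial.coeff_natDegree,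
      mul_div_cancel_right₀ _ (Polynomial.leadingCoeff_ne_zero.mpr f.den_ne_zero)]

/-- An ultrafilter along which a rational map tends to a value other than the one at infinity
converges to a finite preimage of that value. -/
theorem RationalMap.exists_le_nhds_of_tendsto (f : RationalMap) (a : ℂ) (G : Ultrafilter ℂ)
    (hinf : f.evalInf ≠ ((a : ℂ) : OnePoint ℂ)) (hden : ∀ᶠ s in G, f.den.eval s ≠ 0)
    (hlim : Tendsto f.toFun G (𝓝 a)) :
    ∃ s, (G : Filter ℂ) ≤ 𝓝 s ∧ f.den.eval s ≠ 0 ∧ f.toFun s = a := by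
  have hG : ¬ (G : Filter ℂ) ≤ Bornology.cobounded ℂ :=
    fun h => hinf (f.evalInf_eq_of_tendsto a G h hden hlim)
  obtain ⟨B, hB, hBG⟩ := Filter.not_le.mp hG
  have hbdd : Bornology.IsBounded Bᶜ := by
    rwa [Bornology.isBounded_def, compl_compl]
  have hmem : closure Bᶜ ∈ (G : Filter ℂ) :=
    mem_of_superset (Ultrafilter.compl_mem_iff_notMem.mpr hBG) subset_closure
  obtain ⟨s, -, hs⟩ := hbdd.isCompact_closure.ultrafilter_le_nhds' G hmem
  have hnum : f.num.eval s = a * f.den.eval s := by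
    refine tendsto_nhds_unique ((f.num.continuous.tendsto s).mono_left hs)
      ((hlim.mul ((f.den.continuous.tendsto s).mono_left hs)).congr' ?_)
    filter_upwards [hden] with t ht
    exact (f.num_eval_eq ht).symm
  have hd := f.den_eval_ne_zero_of_num_eval_eq_mul hnum
  exact ⟨s, hs, hd, by rw [RationalMap.toFun, hnum, mul_div_cancel_right₀ _ hd]⟩

/-- A graph contained in a properly parametrized curve has exactly one parameter over each of its
points in a punctured neighborhood. -/
theorem IsProper.eventually_existsUnique {E : MvPolynomial (Fin 2) ℂ} {X Y : RationalMap}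
    (hprop : IsProper E X Y) {φ : ℂ → ℂ} {a : ℂ}
    (heq : ∀ᶠ x in 𝓝 a, evalE E x (φ x) = 0) :
    ∀ᶠ x in 𝓝[≠] a, ∃! s : ℂ, X.eval s = ((x : ℂ) : OnePoint ℂ) ∧
      Y.eval s = ((φ x : ℂ) : OnePoint ℂ) := by
  have hfin := nhdsNE_le_cofinite a (hprop.image Prod.fst).compl_mem_cofinite
  filter_upwards [hfin, heq.filter_mono nhdsWithin_le_nhds] with x hx hEx
  by_contra hcon
  exact hx ⟨(x, φ x), ⟨hEx, hcon⟩, rfl⟩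

/-- If `Y = φ ∘ X` holds at points accumulating at `s`, then it holds near `s`. -/
theorem RationalMap.eventually_eval_eq_of_frequently (X Y : RationalMap) {φ : ℂ → ℂ} {s : ℂ}
    (hX : X.den.eval s ≠ 0) (hφ : AnalyticAt ℂ φ (X.toFun s))
    (hfreq : ∃ᶠ t in 𝓝[≠] s, Y.eval t = ((φ (X.toFun t) : ℂ) : OnePoint ℂ)) :
    ∀ᶠ t in 𝓝 s, Y.eval t = ((φ (X.toFun t) : ℂ) : OnePoint ℂ) := by
  have hcomp : AnalyticAt ℂ (fun t => φ (X.toFun t)) s := hφ.comp (X.analyticAt_toFun hX)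
  have hn := AnalyticAt.aeval_polynomial (𝕜 := ℂ) (analyticAt_id (𝕜 := ℂ) (z := s)) Y.num
  have hd := AnalyticAt.aeval_polynomial (𝕜 := ℂ) (analyticAt_id (𝕜 := ℂ) (z := s)) Y.den
  simp only [id, Polynomial.coe_aeval_eq_eval] at hn hd
  have hev : ∀ᶠ t in 𝓝 s, Y.num.eval t = φ (X.toFun t) * Y.den.eval t := by
    refine (hn.frequently_eq_iff_eventually_eq (hcomp.mul hd)).mp (hfreq.mono fun t ht => ?_)
    obtain ⟨hdt, hYt⟩ := (Y.eval_eq_coe_iff _ _).mp ht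
    simp only [Pi.mul_apply]
    rw [Y.num_eval_eq hdt, hYt]
  filter_upwards [hev] with t ht
  have hdt := Y.den_eval_ne_zero_of_num_eval_eq_mul ht
  exact (Y.eval_eq_coe_iff _ _).mpr
    ⟨hdt, by rw [RationalMap.toFun, ht, mul_div_cancel_right₀ _ hdt]⟩

/-- A rational map taking some value other than `X s` is open at each finite `s`. -/
theorem RationalMap.nhds_le_map_nhds (X : RationalMap) {s t : ℂ} (hs : X.den.eval s ≠ 0)
    (ht : X.den.eval t ≠ 0) (hne : X.toFun t ≠ X.toFun s) :
    𝓝 (X.toFun s) ≤ map X.toFun (𝓝 s) := by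
  refine (X.analyticAt_toFun hs).eventually_constant_or_nhds_le_map_nhds.resolve_left
    fun hconst => hne ?_
  have hpoly : X.num = Polynomial.C (X.toFun s) * X.den := by
    refine Polynomial.eq_of_infinite_eval_eq _ _ (infinite_of_mem_nhds s ?_)
    filter_upwards [hconst, X.den.continuous.continuousAt.eventually_ne hs] with z hz hdz
    simp [X.num_eval_eq hdz, hz]
  rw [RationalMap.toFun, hpoly, Polynomial.eval_mul, Polynomial.eval_C,
    mul_div_cancel_right₀ _ ht]

/-- Lemma `proper para` (i): if `(X,Y)` is a proper rational parametrization
of the irreducible curve `E = 0` and `φ` is analytic near `x* ≠ X(∞)` with `E(x,φ(x)) = 0`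
near `x*`, then there is a unique `s* ∈ ℂ` such that `(P, s*)` parametrizes `φ` locally at
`x*`, i.e. `X(s*) = x*` and `Y = φ ∘ X` in a neighborhood of `s*`. -/
theorem statement15 (E : MvPolynomial (Fin 2) ℂ) (hE : Irreducible E)
    (X Y : RationalMap) (hpar : IsParametrization E X Y) (hprop : IsProper E X Y)
    (φ : ℂ → ℂ) (xstar : ℂ)
    (hinf : X.evalInf ≠ ((xstar : ℂ) : OnePoint ℂ))
    (hφ : AnalyticAt ℂ φ xstar)
    (heq : ∀ᶠ x in nhds xstar, evalE E x (φ x) = 0) :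
    ∃! s : ℂ, X.eval s = ((xstar : ℂ) : OnePoint ℂ) ∧
      ∀ᶠ t in nhds s, Y.eval t = ((φ (X.toFun t) : ℂ) : OnePoint ℂ) := by
  have hgood := hprop.eventually_existsUnique heq
  obtain ⟨σ, hσ⟩ : ∃ σ : ℂ → ℂ, ∀ᶠ x in 𝓝[≠] xstar, X.eval (σ x) = ((x : ℂ) : OnePoint ℂ) ∧
      Y.eval (σ x) = ((φ x : ℂ) : OnePoint ℂ) :=
    (hgood.mono fun _ h => h.exists).choice
  simp only [X.eval_eq_coe_iff] at hσ
  refine existsUnique_of_exists_of_unique ?_ ?_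
  · set F : Ultrafilter ℂ := Ultrafilter.of (𝓝[≠] xstar)
    have hF : (F : Filter ℂ) ≤ 𝓝[≠] xstar := Ultrafilter.of_le _
    have hσF := hσ.filter_mono hF
    have hden : ∀ᶠ s in (F.map σ : Filter ℂ), X.den.eval s ≠ 0 :=
      eventually_map.mpr (hσF.mono fun x hx => hx.1.1)
    have hlim : Tendsto X.toFun (F.map σ : Filter ℂ) (𝓝 xstar) := by
      rw [Ultrafilter.coe_map, tendsto_map'_iff]
      refine (tendsto_id.mono_left (hF.trans nhdsWithin_le_nhds)).congr' ?_
      filter_upwards [hσF] with x hx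
      exact hx.1.2.symm
    obtain ⟨s, hs, hds, hXs⟩ := X.exists_le_nhds_of_tendsto xstar _ hinf hden hlim
    refine ⟨s, (X.eval_eq_coe_iff _ _).mpr ⟨hds, hXs⟩,
      X.eventually_eval_eq_of_frequently Y hds (hXs ▸ hφ) ?_⟩
    have hne : ∀ᶠ t in (F.map σ : Filter ℂ), t ≠ s := by
      refine eventually_map.mpr ?_
      filter_upwards [hσF, hF self_mem_nhdsWithin] with x hx hxne hxs
      exact hxne (by rw [Set.mem_singleton_iff, ← hx.1.2, hxs, hXs])
    have hle : (F.map σ : Filter ℂ) ≤ 𝓝[≠] s := le_inf hs (le_principal_iff.mpr hne)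
    refine Filter.Frequently.filter_mono (Eventually.frequently (eventually_map.mpr ?_)) hle
    filter_upwards [hσF] with x hx
    rw [hx.1.2]
    exact hx.2
  · rintro s₁ s₂ ⟨hX₁, hY₁⟩ ⟨hX₂, hY₂⟩
    rw [X.eval_eq_coe_iff] at hX₁ hX₂
    by_contra hne
    obtain ⟨x₀, hx₀, hx₀ne⟩ := (hσ.and self_mem_nhdsWithin).exists
    have hattained : ∀ s, X.den.eval s ≠ 0 → X.toFun s = xstar →
        ∀ p : ℂ → Prop, (∀ᶠ t in 𝓝 s, p t) →
          ∀ᶠ x in 𝓝 xstar, ∃ t, X.den.eval t ≠ 0 ∧ p t ∧ X.toFun t = x := by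
      intro s hd hs p hp
      have hopen := X.nhds_le_map_nhds hd hx₀.1.1 (by rw [hx₀.1.2, hs]; exact hx₀ne)
      rw [hs] at hopen
      refine hopen (mem_map.mpr ?_)
      filter_upwards [hp, X.den.continuous.continuousAt.eventually_ne hd] with t ht hdt
      exact ⟨t, hdt, ht, rfl⟩
    obtain ⟨U₁, U₂, hU₁, hU₂, hs₁, hs₂, hdisj⟩ := t2_separation hne
    have h₁ := hattained s₁ hX₁.1 hX₁.2 _ (hY₁.and (hU₁.mem_nhds hs₁))
    have h₂ := hattained s₂ hX₂.1 hX₂.2 _ (hY₂.and (hU₂.mem_nhds hs₂))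
    obtain ⟨x, hx, ⟨t₁, hd₁, ⟨hYt₁, ht₁⟩, rfl⟩, ⟨t₂, hd₂, ⟨hYt₂, ht₂⟩, hxt₂⟩⟩ :=
      (hgood.and ((h₁.and h₂).filter_mono nhdsWithin_le_nhds)).exists
    have heq₁₂ : t₁ = t₂ := hx.unique ⟨(X.eval_eq_coe_iff _ _).mpr ⟨hd₁, rfl⟩, hYt₁⟩
      ⟨(X.eval_eq_coe_iff _ _).mpr ⟨hd₂, hxt₂⟩, by rw [hYt₂, hxt₂]⟩
    exact Set.disjoint_left.mp hdisj ht₁ (heq₁₂ ▸ ht₂)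
end

section
/- Let P = (x̂, ŷ) be a proper rational parametrization of the curve E(x,y) = 0, and let s* ∈ ℂ with x* := x̂(s*) ≠ ∞. Then there exists a finite-valued function φ such that ŷ = φ∘x̂ holds in a neighborhood of s* if and only if s* is not a critical point of P (i.e. x̂′(s*) ≠ 0 and ŷ(s*) ≠ ∞); and in that case φ is analytic at x*. -/
open Polynomial

open Filter Topology

/-- An irreducible bivariate complex polynomial has infinitely many zeros. -/
theorem infinite_zeros_of_irreducible {E : MvPolynomial (Fin 2) ℂ} (hE : Irreducible E) :
    {p : Fin 2 → ℂ | MvPolynomial.eval p E = 0}.Infinite := by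
  intro hV
  have key (i : Fin 2) : ∃ p, MvPolynomial.eval p E = 0 ∧
      E ∣ MvPolynomial.X i - MvPolynomial.C (p i) := by
    have hmem : (∏ p ∈ hV.toFinset, (MvPolynomial.X i - MvPolynomial.C (p i))) ∈
        MvPolynomial.vanishingIdeal ℂ (MvPolynomial.zeroLocus ℂ (Ideal.span {E})) := by
      intro p hp
      have hp' : MvPolynomial.eval p E = 0 := by
        simpa using hp E (Ideal.mem_span_singleton_self E)
      rw [map_prod]
      exact Finset.prod_eq_zero (hV.mem_toFinset.mpr hp') (by simp)
    rw [MvPolynomial.vanishingIdeal_zeroLocus_eq_radical] at hmem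
    obtain ⟨k, hk⟩ := hmem
    obtain ⟨p, hp, hdvd⟩ := (Prime.dvd_finsetProd_iff hE.prime _).mp
      (hE.prime.dvd_of_dvd_pow (Ideal.mem_span_singleton.mp hk))
    exact ⟨p, hV.mem_toFinset.mp hp, hdvd⟩
  obtain ⟨p, hp, u, hu⟩ := key 0
  obtain ⟨q, -, v, hv⟩ := key 1
  have hu₀ := congrArg (fun F => MvPolynomial.eval p (MvPolynomial.pderiv 0 F)) hu
  have hu₁ := congrArg (fun F => MvPolynomial.eval p (MvPolynomial.pderiv 1 F)) hu
  have hv₁ := congrArg (fun F => MvPolynomial.eval p (MvPolynomial.pderiv 1 F)) hv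
  simp [Derivation.leibniz, hp, MvPolynomial.pderiv_X] at hu₀ hu₁ hv₁
  rcases hu₁ with h | h <;> simp [h] at hu₀ hv₁

/-- An analytic function that is injective near a point has nonzero derivative there. -/
theorem AnalyticAt.deriv_ne_zero_of_injOn {f : ℂ → ℂ} {z₀ : ℂ} (hf : AnalyticAt ℂ f z₀)
    {U : Set ℂ} (hU : U ∈ 𝓝 z₀) (hinj : Set.InjOn f U) : deriv f z₀ ≠ 0 := by
  intro hderiv
  have hnc : ¬ ∀ᶠ z in 𝓝 z₀, f z - f z₀ = 0 := by
    intro h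
    have h' : ∀ᶠ z in 𝓝[≠] z₀, False := by
      filter_upwards [h.filter_mono nhdsWithin_le_nhds, nhdsWithin_le_nhds hU,
        self_mem_nhdsWithin] with z hz hzU hne
      exact hne (hinj hzU (mem_of_mem_nhds hU) (sub_eq_zero.mp hz))
    exact (h'.exists).elim fun _ h => h
  obtain ⟨n, g, hg, hg0, hfg⟩ :=
    (hf.sub analyticAt_const).exists_eventuallyEq_pow_smul_nonzero_iff.mpr hnc
  simp only [Pi.sub_apply, smul_eq_mul] at hfg
  have hn0 : n ≠ 0 := by
    rintro rfl
    simpa [hg0] using hfg.self_of_nhds.symm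
  have hn1 : n ≠ 1 := by
    rintro rfl
    have h1 : HasDerivAt (fun z => (z - z₀) ^ 1 * g z) (g z₀) z₀ := by
      simpa [Pi.mul_def] using ((hasDerivAt_id z₀).sub_const z₀).mul hg.differentiableAt.hasDerivAt
    have h2 := (h1.congr_of_eventuallyEq hfg).deriv
    rw [deriv_sub_const, hderiv] at h2
    exact hg0 h2.symm
  obtain ⟨c, hc⟩ := IsAlgClosed.exists_pow_nat_eq (g z₀) (Nat.pos_of_ne_zero hn0)
  have hc0 : c ≠ 0 := by
    rintro rfl
    exact hg0 (by rw [← hc, zero_pow hn0])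
  let k : ℂ → ℂ := fun z => c * (g z / g z₀) ^ ((n : ℂ)⁻¹)
  have hk : AnalyticAt ℂ k z₀ := by
    refine analyticAt_const.mul ((hg.div analyticAt_const hg0).cpow analyticAt_const ?_)
    simp [hg0]
  have hkn (z : ℂ) : k z ^ n = g z := by
    simp only [k]
    rw [mul_pow, Complex.cpow_nat_inv_pow _ hn0, hc]
    field_simp
  let h : ℂ → ℂ := fun z => (z - z₀) * k z
  have hh : AnalyticAt ℂ h z₀ := (analyticAt_id.sub analyticAt_const).mul hk
  have hh0 : h z₀ = 0 := by simp [h]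
  have hh' : deriv h z₀ ≠ 0 := by
    have h1 : HasDerivAt h (k z₀) z₀ := by
      simpa [Pi.mul_def] using ((hasDerivAt_id z₀).sub_const z₀).mul hk.differentiableAt.hasDerivAt
    rw [h1.deriv]
    simp [k, hg0, hc0]
  have hfh : ∀ᶠ z in 𝓝 z₀, f z = f z₀ + h z ^ n := by
    filter_upwards [hfg] with z hz
    rw [mul_pow, hkn, ← hz]
    ring
  let r := hh.hasStrictDerivAt.localInverse _ _ _ hh'
  have hr0 : Tendsto r (𝓝 0) (𝓝 z₀) := by
    have := (hh.hasStrictDerivAt.hasStrictFDerivAt_equiv hh').localInverse_tendsto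
    rwa [hh0] at this
  have hhr : ∀ᶠ w in 𝓝 0, h (r w) = w := by
    have := hh.hasStrictDerivAt.eventually_right_inverse hh'
    rwa [hh0] at this
  have hgood : ∀ᶠ w in 𝓝 (0 : ℂ), h (r w) = w ∧ r w ∈ U ∧ f (r w) = f z₀ + h (r w) ^ n :=
    hhr.and ((hr0.eventually hU).and (hr0.eventually hfh))
  let ζ : ℂ := Complex.exp (2 * Real.pi * Complex.I / n)
  have hζ : IsPrimitiveRoot ζ n := Complex.isPrimitiveRoot_exp n hn0
  have hζ0 : Tendsto (fun w => ζ * w) (𝓝 0) (𝓝 0) := by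
    simpa using (continuous_const_mul ζ).tendsto 0
  obtain ⟨w, ⟨⟨h1, hU1, hf1⟩, h2, hU2, hf2⟩, hw⟩ :=
    (((hgood.and (hζ0.eventually hgood)).filter_mono nhdsWithin_le_nhds).and
      (self_mem_nhdsWithin (a := (0 : ℂ)) (s := {0}ᶜ))).exists
  have hfeq : f (r w) = f (r (ζ * w)) := by
    rw [hf1, hf2, h1, h2, mul_pow, hζ.pow_eq_one, one_mul]
  have hweq : w = ζ * w :=
    h1.symm.trans ((congrArg h (hinj hU1 hU2 hfeq)).trans h2)
  have hw0 : w ≠ 0 := hw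
  exact hζ.ne_one (by omega) (mul_right_cancel₀ hw0 (by rw [one_mul, ← hweq]))

namespace RationalMap

theorem eval_eq_coe_iff_s16 (f : RationalMap) (s a : ℂ) :
    f.eval s = (a : OnePoint ℂ) ↔ f.den.eval s ≠ 0 ∧ f.toFun s = a := by
  unfold eval
  split_ifs with h <;> simp [h]

theorem analyticAt_toFun_s16 (f : RationalMap) {s : ℂ} (hs : f.den.eval s ≠ 0) :
    AnalyticAt ℂ f.toFun s := by
  have h (p : ℂ[X]) : AnalyticAt ℂ (fun z => p.eval z) s :=
    analyticAt_id.aeval_polynomial p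
  exact (h f.num).div (h f.den) hs

theorem hasDerivAt_toFun (f : RationalMap) {s : ℂ} (hs : f.den.eval s ≠ 0) :
    HasDerivAt f.toFun
      ((f.num.derivative * f.den - f.num * f.den.derivative).eval s / f.den.eval s ^ 2) s := by
  rw [eval_sub, eval_mul, eval_mul]
  exact (f.num.hasDerivAt s).div (f.den.hasDerivAt s) hs

theorem eventually_den_ne_zero (f : RationalMap) {s : ℂ} (hs : f.den.eval s ≠ 0) :
    ∀ᶠ t in 𝓝 s, f.den.eval t ≠ 0 :=
  f.den.continuous.continuousAt.eventually_ne hs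

/-- A rational map that is constant near a point is constant. -/
theorem toFun_eq_of_eventually_eq (f : RationalMap) {s c : ℂ} (hs : f.den.eval s ≠ 0)
    (h : ∀ᶠ t in 𝓝 s, f.toFun t = c) {t : ℂ} (ht : f.den.eval t ≠ 0) : f.toFun t = c := by
  have hinf : {t | (f.num - C c * f.den).IsRoot t}.Infinite := by
    refine infinite_of_mem_nhds s ?_
    filter_upwards [h, f.eventually_den_ne_zero hs] with t ht hd
    rw [toFun, div_eq_iff hd] at ht
    simp [ht]
  have h0 := congrArg (Polynomial.eval t) (eq_zero_of_infinite_isRoot _ hinf)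
  rw [toFun, div_eq_iff ht]
  simpa [sub_eq_zero] using h0

end RationalMap

/-- A proper parametrization of an irreducible curve is not constant near any point. -/
theorem IsProper.not_eventually_const {E : MvPolynomial (Fin 2) ℂ} (hE : Irreducible E)
    {X Y : RationalMap} (hprop : IsProper E X Y) {s c d : ℂ}
    (hX : X.den.eval s ≠ 0) (hY : Y.den.eval s ≠ 0)
    (hXc : ∀ᶠ t in 𝓝 s, X.toFun t = c) (hYd : ∀ᶠ t in 𝓝 s, Y.toFun t = d) : False := by
  have hfin : {p : ℂ × ℂ | evalE E p.1 p.2 = 0}.Finite := by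
    refine (hprop.union (Set.finite_singleton (c, d))).subset fun p hp => ?_
    by_contra hcon
    simp only [Set.mem_union, Set.mem_ofPred_eq, not_or, not_and, not_not] at hcon
    obtain ⟨t, ⟨h1, h2⟩, -⟩ := hcon.1 hp
    rw [RationalMap.eval_eq_coe_iff_s16] at h1 h2
    exact hcon.2 (Prod.ext (h1.2.symm.trans (X.toFun_eq_of_eventually_eq hX hXc h1.1))
      (h2.2.symm.trans (Y.toFun_eq_of_eventually_eq hY hYd h2.1)))
  refine infinite_zeros_of_irreducible hE
    ((hfin.image fun p => ![p.1, p.2]).subset fun p hp => ⟨(p 0, p 1), ?_, ?_⟩)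
  · have : ![p 0, p 1] = p := by ext i; fin_cases i <;> rfl
    simpa [evalE, this] using hp
  · ext i; fin_cases i <;> rfl

/-- If a proper parametrization `(X, Y)` locally parametrizes a function, then `X` has nonzero
derivative and `Y` is finite at the base point. -/
theorem IsProper.not_isCriticalPt {E : MvPolynomial (Fin 2) ℂ} (hE : Irreducible E)
    {X Y : RationalMap} (hpar : IsParametrization E X Y) (hprop : IsProper E X Y)
    {s : ℂ} (hX : X.den.eval s ≠ 0) {φ : ℂ → ℂ}
    (hφ : ∀ᶠ t in 𝓝 s, Y.eval t = ((φ (X.toFun t) : ℂ) : OnePoint ℂ)) :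
    ¬ IsCriticalPt X Y s := by
  have hφ' : ∀ᶠ t in 𝓝 s, Y.den.eval t ≠ 0 ∧ Y.toFun t = φ (X.toFun t) :=
    hφ.mono fun t ht => (Y.eval_eq_coe_iff_s16 t _).mp ht
  have hY := hφ'.self_of_nhds.1
  have hXan := X.analyticAt_toFun_s16 hX
  have hne : ∀ a, ∀ᶠ t in 𝓝[≠] s, X.toFun t ≠ a := by
    intro a
    refine (hXan.eventually_eq_or_eventually_ne analyticAt_const).resolve_left fun h => ?_
    refine hprop.not_eventually_const hE hX hY h (d := φ a) ?_
    filter_upwards [h, hφ'] with t h1 h2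
    rw [h2.2, h1]
  have hbad := (eventually_all_finite hprop).mpr fun p _ => hne p.1
  have hcurve : ∀ᶠ t in 𝓝[≠] s, evalE E (X.toFun t) (Y.toFun t) = 0 := by
    have h := (Set.Finite.subset hpar (Set.sdiff_subset (t := {s}))).isClosed.isOpen_compl.mem_nhds
      (x := s) (by simp)
    filter_upwards [nhdsWithin_le_nhds h, self_mem_nhdsWithin] with t ht hts
    by_contra hcon
    exact ht ⟨fun h => hcon h.2.2, hts⟩
  have hpunct : ∀ᶠ t in 𝓝 s, t ≠ s →
      X.toFun t ≠ X.toFun s ∧ evalE E (X.toFun t) (Y.toFun t) = 0 ∧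
      ∀ p ∈ {p : ℂ × ℂ | evalE E p.1 p.2 = 0 ∧ ¬ ∃! s : ℂ,
        X.eval s = ((p.1 : ℂ) : OnePoint ℂ) ∧ Y.eval s = ((p.2 : ℂ) : OnePoint ℂ)},
        X.toFun t ≠ p.1 :=
    eventually_nhdsWithin_iff.mp ((hne _).and (hcurve.and hbad))
  have hderiv : deriv X.toFun s ≠ 0 := by
    refine hXan.deriv_ne_zero_of_injOn
      (hpunct.and (hφ'.and (X.eventually_den_ne_zero hX))) ?_
    rintro t ⟨ht, hYt, hXt⟩ t' ⟨ht', hYt', hXt'⟩ heq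
    by_cases hts : t = s
    · subst hts
      by_contra hne'
      exact (ht' (Ne.symm hne')).1 heq.symm
    by_cases hts' : t' = s
    · subst hts'
      exact absurd heq (ht hts).1
    obtain ⟨-, hE0, hnb⟩ := ht hts
    by_contra htt
    refine hnb (X.toFun t, Y.toFun t) ⟨hE0, fun hu => htt (hu.unique ?_ ?_)⟩ rfl
    · simp [RationalMap.eval_eq_coe_iff_s16, hXt, hYt.1]
    · simp [RationalMap.eval_eq_coe_iff_s16, hXt', hYt'.1, heq, hYt.2, hYt'.2]
  rw [(X.hasDerivAt_toFun hX).deriv] at hderiv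
  rintro (h | h)
  · exact hderiv (by rw [h, zero_div])
  · exact hY h

/-- Lemma `proper para` (ii): if `(X,Y)` is a proper rational
parametrization of the irreducible curve `E = 0` and `s* ∈ ℂ` with `X(s*) ≠ ∞`, then
`(P, s*)` parametrizes a finite-valued function `φ` locally if and only if `s*` is not a
critical point of `P`; in that case any such `φ` is analytic at `x* = X(s*)`. -/
theorem statement16 (E : MvPolynomial (Fin 2) ℂ) (hE : Irreducible E)
    (X Y : RationalMap) (hpar : IsParametrization E X Y) (hprop : IsProper E X Y)
    (sstar : ℂ) (hfin : X.den.eval sstar ≠ 0) :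
    ((∃ φ : ℂ → ℂ,
        ∀ᶠ t in nhds sstar, Y.eval t = ((φ (X.toFun t) : ℂ) : OnePoint ℂ)) ↔
      ¬ IsCriticalPt X Y sstar) ∧
    (∀ φ : ℂ → ℂ,
      (∀ᶠ t in nhds sstar, Y.eval t = ((φ (X.toFun t) : ℂ) : OnePoint ℂ)) →
      AnalyticAt ℂ φ (X.toFun sstar)) := by
  have hcrit (φ : ℂ → ℂ)
      (hφ : ∀ᶠ t in nhds sstar, Y.eval t = ((φ (X.toFun t) : ℂ) : OnePoint ℂ)) :
      ¬ IsCriticalPt X Y sstar := hprop.not_isCriticalPt hE hpar hfin hφ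
  have hXan := X.analyticAt_toFun_s16 hfin
  have hderiv (h : ¬ IsCriticalPt X Y sstar) : deriv X.toFun sstar ≠ 0 := by
    rw [(X.hasDerivAt_toFun hfin).deriv]
    exact div_ne_zero (fun h0 => h (Or.inl h0)) (pow_ne_zero 2 hfin)
  refine ⟨⟨fun ⟨φ, hφ⟩ => hcrit φ hφ, fun h => ?_⟩, fun φ hφ => ?_⟩
  · refine ⟨Y.toFun ∘ hXan.hasStrictDerivAt.localInverse _ _ _ (hderiv h), ?_⟩
    filter_upwards [hXan.hasStrictDerivAt.eventually_left_inverse (hderiv h),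
      Y.eventually_den_ne_zero fun h0 => h (Or.inr h0)] with t ht hd
    rw [RationalMap.eval_eq_coe_iff_s16, Function.comp_apply, ht]
    exact ⟨hd, rfl⟩
  · have h := hcrit φ hφ
    rw [← analyticAt_comp_iff_of_deriv_ne_zero hXan (hderiv h)]
    refine (Y.analyticAt_toFun_s16 fun h0 => h (Or.inr h0)).congr ?_
    filter_upwards [hφ] with t ht
    exact ((Y.eval_eq_coe_iff_s16 t _).mp ht).2
end

section
/- The functions Z₀ and Z₁ satisfy Tutte's equation with one catalytic variable: for all u ≠ 0 in a neighborhood of 0 in ℂ, (ν_c² − 1)^{−1}·( ν_c·ΔZ₀(u) − Z₁(u) ) = t_c·( Δ²Z₀(u) + (ΔZ₀(u))² ) + u, where ΔZ₀(u) = (Z₀(u) − 1)/u and Δ²Z₀(u) = (Z₀(u) − 1 − z_{1,0}·u)/u², with z_{1,0} = Z₀′(0). -/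
noncomputable def nuc : ℝ := 1 + 2 * Real.sqrt 7

noncomputable def tc : ℝ := Real.sqrt 10 / (8 * (7 + Real.sqrt 7) ^ ((3:ℝ)/2))

noncomputable def uc : ℝ := (6/5) * (7 + Real.sqrt 7) * tc

/-- The rational parametrization `û` of the `u`-variable. -/
noncomputable def uhat (H : ℂ) : ℂ :=
  ((uc : ℂ) / 3) * H * (10 - 12 * H + 6 * H ^ 2 - H ^ 3)

/-- The rational parametrization `Ẑ₀`. -/
noncomputable def Z0hat (H : ℂ) : ℂ :=
  (1/10) * (1 - (1 - (Real.sqrt 7 : ℂ)) * H + 3 * H ^ 2 - H ^ 3)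
    * (10 - 12 * H + 6 * H ^ 2 - H ^ 3)

/-- The rational parametrization `Ẑ₁`. -/
noncomputable def Z1hat (H : ℂ) : ℂ :=
  (3 / (10 * (uc : ℂ))) *
    ((Real.sqrt 7 : ℂ) - 1 + H - 3 * (4 - 3 * H + H ^ 2) / (10 - 12 * H + 6 * H ^ 2 - H ^ 3))

/-- The rational parametrization `Â`. -/
noncomputable def Ahat (H : ℂ) : ℂ :=
  (1/10) * ((((3:ℝ)/2) ^ ((7:ℝ)/3) : ℝ) : ℂ) * (9 - 8 * H + 3 * H ^ 2) / (3 - 3 * H + H ^ 2) ^ 2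

theorem uc_pos : 0 < uc := by
  unfold uc tc
  positivity

theorem uc_sq : uc ^ 2 = 3 * (7 - Real.sqrt 7) / 560 := by
  have hs : Real.sqrt 7 ^ 2 = 7 := Real.sq_sqrt (by norm_num)
  have hpow : ((7 + Real.sqrt 7) ^ ((3:ℝ)/2)) ^ 2 = (7 + Real.sqrt 7) ^ 3 := by
    rw [← Real.rpow_natCast, ← Real.rpow_mul (by positivity), ← Real.rpow_natCast]
    norm_num
  have h7 : (7 + Real.sqrt 7) ≠ 0 := by positivity
  unfold uc tc
  rw [mul_pow, div_pow, mul_pow, mul_pow, hpow, Real.sq_sqrt (by norm_num)]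
  field_simp
  linear_combination 4800 * hs

theorem tc_eq : tc = 5 * (7 - Real.sqrt 7) / 252 * uc := by
  have hs : Real.sqrt 7 ^ 2 = 7 := Real.sq_sqrt (by norm_num)
  unfold uc
  linear_combination tc / 42 * hs

theorem inv_nuc_sq_sub_one : (nuc ^ 2 - 1)⁻¹ = (7 - Real.sqrt 7) / 168 := by
  have hs : Real.sqrt 7 ^ 2 = 7 := Real.sq_sqrt (by norm_num)
  apply inv_eq_of_mul_eq_one_right
  unfold nuc
  linear_combination (6 - Real.sqrt 7) / 42 * hs

/-- Tutte's equation in the rational parametrization. -/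
theorem tutte_equation_parametrized {H : ℂ} (hH : H ≠ 0)
    (hP : 10 - 12 * H + 6 * H ^ 2 - H ^ 3 ≠ 0) :
    ((nuc : ℂ) ^ 2 - 1)⁻¹ * ((nuc : ℂ) * ((Z0hat H - 1) / uhat H) - Z1hat H)
      = (tc : ℂ) * ((Z0hat H - 1 - 3 * ((Real.sqrt 7 : ℂ) - 11 / 5) / (10 * (uc : ℂ)) * uhat H)
          / uhat H ^ 2 + ((Z0hat H - 1) / uhat H) ^ 2) + uhat H := by
  have hs : (Real.sqrt 7 : ℂ) ^ 2 = 7 := by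
    exact_mod_cast Real.sq_sqrt (show (0:ℝ) ≤ 7 by norm_num)
  have hw0 : (uc : ℂ) ≠ 0 := by exact_mod_cast uc_pos.ne'
  have hw : (uc : ℂ) ^ 2 = 3 * (7 - (Real.sqrt 7 : ℂ)) / 560 := by exact_mod_cast uc_sq
  have ht : (tc : ℂ) = 5 * (7 - (Real.sqrt 7 : ℂ)) / 252 * uc := by exact_mod_cast tc_eq
  have hn : ((nuc : ℂ) ^ 2 - 1)⁻¹ = (7 - (Real.sqrt 7 : ℂ)) / 168 := by
    exact_mod_cast inv_nuc_sq_sub_one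
  have hnu : (nuc : ℂ) = 1 + 2 * (Real.sqrt 7 : ℂ) := by simp [nuc]
  rw [hn, ht, hnu]
  unfold Z0hat Z1hat uhat
  generalize (Real.sqrt 7 : ℂ) = s at *
  generalize (uc : ℂ) = w at *
  obtain ⟨P, hPdef⟩ : ∃ P, P = 10 - 12 * H + 6 * H ^ 2 - H ^ 3 := ⟨_, rfl⟩
  rw [← hPdef] at hP ⊢
  field_simp
  rw [hw]
  subst hPdef
  grind

theorem hasStrictDerivAt_uhat_zero : HasStrictDerivAt uhat (10 * (uc : ℂ) / 3) 0 := by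
  have hid := hasStrictDerivAt_id (0 : ℂ)
  have h := (hid.const_mul ((uc : ℂ) / 3)).mul
    ((((hid.const_mul 12).const_sub 10).add ((hid.pow 2).const_mul 6)).sub (hid.pow 3))
  refine h.congr_deriv ?_
  simp
  ring

theorem hasDerivAt_Z0hat_zero : HasDerivAt Z0hat ((Real.sqrt 7 : ℂ) - 11 / 5) 0 := by
  have hid := hasDerivAt_id (0 : ℂ)
  have h := (((((hid.const_mul (1 - (Real.sqrt 7 : ℂ))).const_sub 1).add
    ((hid.pow 2).const_mul 3)).sub (hid.pow 3)).const_mul (1 / 10)).mul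
    ((((hid.const_mul 12).const_sub 10).add ((hid.pow 2).const_mul 6)).sub (hid.pow 3))
  refine h.congr_deriv ?_
  simp
  ring

/-- Tutte's equation with one catalytic variable for `Z₀` and `Z₁`:
for all `u ≠ 0` in a neighborhood of `0`,
`(ν_c² − 1)⁻¹ (ν_c ΔZ₀(u) − Z₁(u)) = t_c (Δ²Z₀(u) + (ΔZ₀(u))²) + u`,
where `ΔZ₀(u) = (Z₀(u) − 1)/u`, `Δ²Z₀(u) = (Z₀(u) − 1 − z_{1,0} u)/u²`, `z_{1,0} = Z₀′(0)`. -/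
theorem statement19 (Z0 Z1 : ℂ → ℂ) (z10 : ℂ)
    -- `Z₀ = Ẑ₀ ∘ û⁻¹` and `Z₁ = Ẑ₁ ∘ û⁻¹` near `0`
    (hZ0 : ∀ᶠ H in nhds (0 : ℂ), Z0 (uhat H) = Z0hat H)
    (hZ1 : ∀ᶠ H in nhds (0 : ℂ), Z1 (uhat H) = Z1hat H)
    (hz10 : deriv Z0 0 = z10) :
    ∀ᶠ u in nhdsWithin (0 : ℂ) {(0 : ℂ)}ᶜ,
      ((nuc : ℂ) ^ 2 - 1)⁻¹ * ((nuc : ℂ) * ((Z0 u - 1) / u) - Z1 u)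
        = (tc : ℂ) * ((Z0 u - 1 - z10 * u) / u ^ 2 + ((Z0 u - 1) / u) ^ 2) + u := by
  have hw0 : (uc : ℂ) ≠ 0 := by exact_mod_cast uc_pos.ne'
  have huc : 10 * (uc : ℂ) / 3 ≠ 0 := by simpa using hw0
  have hu0 : uhat 0 = 0 := by simp [uhat]
  have hd := hasStrictDerivAt_uhat_zero
  obtain ⟨g, hg, hg0, hright⟩ : ∃ g : ℂ → ℂ, HasDerivAt g (10 * (uc : ℂ) / 3)⁻¹ 0 ∧ g 0 = 0 ∧
      ∀ᶠ u in nhds (0 : ℂ), uhat (g u) = u := by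
    have hg := (hd.to_localInverse huc).hasDerivAt
    have hright := (hd.hasStrictFDerivAt_equiv huc).eventually_right_inverse
    have hg0 := (hd.hasStrictFDerivAt_equiv huc).localInverse_apply_image
    rw [hu0] at hg hright hg0
    exact ⟨_, hg, hg0, hright⟩
  have hgt : Filter.Tendsto g (nhds 0) (nhds 0) := by simpa [hg0] using hg.continuousAt.tendsto
  have hZ0g : ∀ᶠ u in nhds (0 : ℂ), Z0 u = Z0hat (g u) := by
    filter_upwards [hgt.eventually hZ0, hright] with u h1 h2
    rwa [h2] at h1
  have hz : z10 = 3 * ((Real.sqrt 7 : ℂ) - 11 / 5) / (10 * (uc : ℂ)) := by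
    have hZ : HasDerivAt Z0hat ((Real.sqrt 7 : ℂ) - 11 / 5) (g 0) := by
      rw [hg0]
      exact hasDerivAt_Z0hat_zero
    have h := (hZ.comp 0 hg).congr_of_eventuallyEq hZ0g
    rw [← hz10, h.deriv]
    field_simp
  have hP : ∀ᶠ H in nhds (0 : ℂ), 10 - 12 * H + 6 * H ^ 2 - H ^ 3 ≠ 0 := by
    have hc : ContinuousAt (fun H : ℂ => 10 - 12 * H + 6 * H ^ 2 - H ^ 3) 0 := by fun_prop
    exact hc.eventually_ne (by norm_num)
  filter_upwards [self_mem_nhdsWithin, hZ0g.filter_mono nhdsWithin_le_nhds,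
    (hgt.eventually hZ1).filter_mono nhdsWithin_le_nhds,
    (hgt.eventually hP).filter_mono nhdsWithin_le_nhds,
    hright.filter_mono nhdsWithin_le_nhds] with u hu h0 h1 hPu hr
  have hgu : g u ≠ 0 := by
    intro h
    rw [h, hu0] at hr
    exact hu hr.symm
  have key := tutte_equation_parametrized hgu hPu
  rw [hr] at h1 key
  rw [h0, h1, hz]
  exact key
end
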